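/- arXiv:1206.3424 — 3 statements merged into one kernel-verified Lean document; each statement's English description precedes it below -/
import Mathlib

section
/- Let n ≥ 2 be an even integer and let Ω ⊂ ℝⁿ be an elliptical domain. Then for any two distinct points x₀, x₁ ∈ Ω, the Hilbert transform h_{x₀,x₁} of s ↦ (Rχ_Ω)(ω⋆(x₀,x₁), s) is n times differentiable at s⋆(x₀,x₁) and h_{x₀,x₁}^{(n)}(s⋆(x₀,x₁)) = 0; equivalently, the kernel k_Ω(x₀,x₁) vanishes for all distinct x₀,x₁ ∈ Ω, so the operator K_Ω vanishes identically on functions supported in Ω. -/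
/-! Write `n = 2k + 2` and let `Ω` be the ellipsoid with semi-axes `a i`.

The hyperplane slices of `Ω` orthogonal to a direction `ω` are translated, rescaled copies of the
central one, so the Radon transform of its characteristic function is
`C * √(b² - s²) ^ (2k+1)` with `b = |Aω|` (`radonChi_ellipsoid`).

The principal value of `∫ dt / (√(b² - t²) (s - t))` is zero for `|s| < b`, as an explicit
antiderivative shows (`pv_cauchy_eq_zero`). Since
`√(b² - t²) ^ (2k+1) = (b² - t²) ^ (k+1) / √(b² - t²)` and
`((b² - t²) ^ (k+1) - (b² - s²) ^ (k+1)) / (s - t)` is a polynomial in `s` and `t` of degree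
`2k + 1` in `s`, the Hilbert transform of the Radon transform agrees on `(-b, b)` with a
polynomial of degree at most `2k + 1 = n - 1` (`exists_polynomial_pvHilbert`).

Finally `s⋆` is the height of the midpoint of `x₀` and `x₁`, a point of `Ω`, so `|s⋆| < b`
(`sStar_sq_lt`), and the `n`-th derivative of a polynomial of degree less than `n` vanishes there.
-/

open MeasureTheory Filter Metric Set
open scoped Topology ENNReal RealInnerProductSpace NNReal

noncomputable section

abbrev En (n : ℕ) := EuclideanSpace ℝ (Fin n)

/-- The operator `𝒟 = (2t)⁻¹ ∂_t` (differentiation with respect to `t²`). -/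
def Dop (g : ℝ → ℝ) : ℝ → ℝ := fun t => (2 * t)⁻¹ * deriv g t

/-- Total surface area `ω_{n-1} = 2 π^{n/2} / Γ(n/2)` of the unit sphere in `ℝⁿ`. -/
def sphereArea (n : ℕ) : ℝ := 2 * Real.pi ^ ((n : ℝ) / 2) / Real.Gamma ((n : ℝ) / 2)

/-- Spherical mean `(Mf)(x,r)`. -/
def sphMean (n : ℕ) (f : En n → ℝ) (x : En n) (r : ℝ) : ℝ :=
  (sphereArea n)⁻¹ * ∫ σ in sphere (0 : En n) 1, f (x + r • σ) ∂ μH[(n : ℝ) - 1]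

/-- Radon transform of the characteristic function of `Ω`. -/
def radonChi (n : ℕ) (Ω : Set (En n)) (ω : En n) (s : ℝ) : ℝ :=
  (μH[(n : ℝ) - 1] (Ω ∩ {x : En n | ⟪ω, x⟫ = s})).toReal

def omegaStar (n : ℕ) (x₀ x₁ : En n) : En n := ‖x₁ - x₀‖⁻¹ • (x₁ - x₀)

def sStar (n : ℕ) (x₀ x₁ : En n) : ℝ := (‖x₁‖ ^ 2 - ‖x₀‖ ^ 2) / (2 * ‖x₁ - x₀‖)

/-- Principal-value Hilbert transform of `φ` at `s`. -/
def pvHilbert (φ : ℝ → ℝ) (s : ℝ) : ℝ :=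
  Real.pi⁻¹ * limUnder (𝓝[>] (0 : ℝ)) fun ε => ∫ t in {t : ℝ | ε < |t - s|}, φ t / (s - t)

/-- The kernel `k_Ω` in even dimensions. -/
def kernEven (n : ℕ) (Ω : Set (En n)) (x₀ x₁ : En n) : ℝ :=
  ((-1 : ℝ) ^ ((n - 2) / 2) / (2 ^ (n + 1) * Real.pi ^ (n - 1))) *
    iteratedDeriv n (pvHilbert (radonChi n Ω (omegaStar n x₀ x₁))) (sStar n x₀ x₁) /
      ‖x₁ - x₀‖ ^ (n - 1)

/-- The kernel `k_Ω` in odd dimensions. -/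
def kernOdd (n : ℕ) (Ω : Set (En n)) (x₀ x₁ : En n) : ℝ :=
  ((-1 : ℝ) ^ ((n - 1) / 2) / (2 ^ (n + 1) * Real.pi ^ (n - 1))) *
    iteratedDeriv n (radonChi n Ω (omegaStar n x₀ x₁)) (sStar n x₀ x₁) /
      ‖x₁ - x₀‖ ^ (n - 1)

/-- The smoothing operator `K_Ω` with a given kernel. -/
def Kop (n : ℕ) (Ω : Set (En n)) (kern : En n → En n → ℝ) (f : En n → ℝ) (x₀ : En n) : ℝ :=
  ∫ x₁ in Ω, kern x₀ x₁ * f x₁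

/-- Principal value of `∫₀^∞ g(r) dr` with singularity at `r = a`. -/
def pvRadial (g : ℝ → ℝ) (a : ℝ) : ℝ :=
  limUnder (𝓝[>] (0 : ℝ)) fun ε => ∫ r in {r : ℝ | 0 < r ∧ ε < |r - a|}, g r

/-- Divergence of a vector field on `ℝⁿ`. -/
def divg (n : ℕ) (Φ : En n → En n) (z : En n) : ℝ :=
  ∑ i, fderiv ℝ Φ z (EuclideanSpace.single i 1) i


/-! ### Radon transform of an ellipsoid -/

open scoped Pointwise in
/-- The slice at height `s` in direction `ω` is empty for `s² ≥ B := |Aω|²`, by Cauchy–Schwarz;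
for `s² < B` it is a translate, along `A²ω`, of the central slice scaled by `√(1 - s²/B)`. Hence
the Radon transform is a multiple of `√(B - s²) ^ (n - 1)`. The measure of the central slice only
enters as a constant, so its finiteness plays no role. -/
theorem radonChi_ellipsoid (k : ℕ) (a : Fin (2 * k + 2) → ℝ) (ha : ∀ i, 0 < a i)
    (ω : En (2 * k + 2)) (hω : ω ≠ 0) :
    ∃ C : ℝ, ∀ s, radonChi (2 * k + 2) {x | ∑ i, (x i / a i) ^ 2 < 1} ω s =
      C * √(∑ i, (a i * ω i) ^ 2 - s ^ 2) ^ (2 * k + 1) := by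
  set Ω : Set (En (2 * k + 2)) := {x | ∑ i, (x i / a i) ^ 2 < 1} with hΩ
  set B : ℝ := ∑ i, (a i * ω i) ^ 2 with hB
  have hBpos : 0 < B := by
    obtain ⟨i, hi⟩ : ∃ i, ω i ≠ 0 := by
      by_contra! h
      exact hω (by ext i; simpa using h i)
    refine Finset.sum_pos' (fun i _ => sq_nonneg _) ⟨i, Finset.mem_univ _, ?_⟩
    have := (ha i).ne'
    positivity
  have hin : ∀ x : En (2 * k + 2), ⟪ω, x⟫ = ∑ i, ω i * x i := by
    intro x
    simp [PiLp.inner_apply, mul_comm]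
  -- `c = A²ω` is conjugate to the hyperplane `ω^⊥`, so the cross term in `hq` below vanishes
  set c : En (2 * k + 2) := WithLp.toLp 2 (fun i => a i ^ 2 * ω i) with hc
  have hci : ∀ i, c i = a i ^ 2 * ω i := fun i => rfl
  have hωc : ⟪ω, c⟫ = B := by
    rw [hin, hB]
    exact Finset.sum_congr rfl fun i _ => by rw [hci]; ring
  refine ⟨(μH[((2 * k + 2 : ℕ) : ℝ) - 1] (Ω ∩ {x | ⟪ω, x⟫ = 0})).toReal / √B ^ (2 * k + 1),
    fun s => ?_⟩
  rcases le_or_gt B (s ^ 2) with hs | hs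
  · have : Ω ∩ {x | ⟪ω, x⟫ = s} = ∅ := by
      ext x
      simp only [mem_inter_iff, mem_ofPred_eq, mem_empty_iff_false, iff_false, not_and, hΩ]
      intro hx hxs
      have h1 := Finset.sum_mul_sq_le_sq_mul_sq Finset.univ (fun i => a i * ω i)
        (fun i => x i / a i)
      have h2 : ∑ i, (a i * ω i) * (x i / a i) = s := by
        rw [← hxs, hin]
        refine Finset.sum_congr rfl fun i _ => ?_
        have := (ha i).ne'
        field_simp
      rw [h2, ← hB] at h1
      nlinarith
    rw [radonChi, this, Real.sqrt_eq_zero_of_nonpos (sub_nonpos.2 hs)]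
    simp
  · set r : ℝ := √(B - s ^ 2) / √B with hr
    have hrpos : 0 < r := div_pos (Real.sqrt_pos.2 (by linarith)) (Real.sqrt_pos.2 hBpos)
    have hr2 : r ^ 2 = (B - s ^ 2) / B := by
      rw [hr, div_pow, Real.sq_sqrt (by linarith), Real.sq_sqrt hBpos.le]
    have hq : ∀ y : En (2 * k + 2), ⟪ω, y⟫ = 0 →
        ∑ i, (((s / B) • c + r • y) i / a i) ^ 2 =
          s ^ 2 / B + (B - s ^ 2) / B * ∑ i, (y i / a i) ^ 2 := by
      intro y hy
      have : ∀ i, (((s / B) • c + r • y) i / a i) ^ 2 =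
          (s / B) ^ 2 * (a i * ω i) ^ 2 + 2 * (s / B) * r * (ω i * y i)
            + r ^ 2 * (y i / a i) ^ 2 := by
        intro i
        have := (ha i).ne'
        simp only [PiLp.add_apply, PiLp.smul_apply, smul_eq_mul, hci]
        field_simp
        ring
      rw [Finset.sum_congr rfl fun i _ => this i, Finset.sum_add_distrib, Finset.sum_add_distrib,
        ← Finset.mul_sum, ← Finset.mul_sum, ← Finset.mul_sum, ← hin, hy, ← hB, hr2]
      field_simp
      ring
    have hset : Ω ∩ {x | ⟪ω, x⟫ = s} =
        IsometryEquiv.addLeft ((s / B) • c) '' (r • (Ω ∩ {x | ⟪ω, x⟫ = 0})) := by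
      have hiff : ∀ T : ℝ, s ^ 2 / B + (B - s ^ 2) / B * T < 1 ↔ T < 1 := by
        intro T
        rw [div_mul_eq_mul_div, ← add_div, div_lt_one hBpos]
        constructor <;> intro h <;> nlinarith
      have hmem : ∀ y : En (2 * k + 2), ⟪ω, y⟫ = 0 → ((s / B) • c + r • y ∈ Ω ↔ y ∈ Ω) := by
        intro y hy
        simp only [hΩ, mem_ofPred_eq]
        rw [hq y hy, hiff]
      ext x
      constructor
      · rintro ⟨hx, hxs⟩
        simp only [mem_ofPred_eq] at hxs
        set y := r⁻¹ • (x - (s / B) • c) with hy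
        have hxy : (s / B) • c + r • y = x := by
          rw [hy, smul_inv_smul₀ hrpos.ne']
          abel
        have hy0 : ⟪ω, y⟫ = 0 := by
          rw [hy, inner_smul_right, inner_sub_right, inner_smul_right, hωc, hxs,
            div_mul_cancel₀ _ hBpos.ne']
          simp
        refine ⟨r • y, smul_mem_smul_set ⟨(hmem y hy0).1 (hxy ▸ hx), hy0⟩, ?_⟩
        simpa using hxy
      · rintro ⟨_, ⟨y, ⟨hy, hy0⟩, rfl⟩, rfl⟩
        simp only [mem_ofPred_eq] at hy0
        refine ⟨by simpa using (hmem y hy0).2 hy, ?_⟩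
        simp only [IsometryEquiv.addLeft_apply, mem_ofPred_eq]
        rw [inner_add_right, inner_smul_right, inner_smul_right, hy0, hωc,
          div_mul_cancel₀ _ hBpos.ne']
        simp
    have hd : (((2 * k + 2 : ℕ) : ℝ) - 1) = ((2 * k + 1 : ℕ) : ℝ) := by push_cast; ring
    rw [radonChi, hset, IsometryEquiv.hausdorffMeasure_image, hd,
      Measure.hausdorffMeasure_smul₀ (by positivity) hrpos.ne', NNReal.rpow_natCast,
      ENNReal.smul_def, smul_eq_mul, ENNReal.toReal_mul]
    simp only [ENNReal.coe_toReal, NNReal.coe_pow, coe_nnnorm, Real.norm_of_nonneg hrpos.le]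
    rw [hr, div_pow]
    ring

/-! ### The finite Hilbert transform -/

/-- The weight `1 / √(b² - t²)` is the derivative of `arcsin (t / b)` on `(-b, b)`; outside this
interval it is `0` by the conventions for `√` and `⁻¹`. -/
theorem integrable_inv_sqrt (b : ℝ) (hb : 0 < b) : Integrable fun t : ℝ => (√(b ^ 2 - t ^ 2))⁻¹ := by
  have h : IntegrableOn (fun t : ℝ => (√(b ^ 2 - t ^ 2))⁻¹) (Ioc (-b) b) := by
    refine intervalIntegral.integrableOn_deriv_of_nonneg (g := fun t => Real.arcsin (t / b))
      (by fun_prop) (fun x hx => ?_) (fun x _ => by positivity)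
    have h1 : x / b ≠ -1 := by
      rw [Ne, div_eq_iff hb.ne']; intro h; linarith [hx.1]
    have h2 : x / b ≠ 1 := by
      rw [Ne, div_eq_iff hb.ne']; intro h; linarith [hx.2]
    refine ((Real.hasDerivAt_arcsin h1 h2).comp x ((hasDerivAt_id x).div_const b)).congr_deriv ?_
    have : 1 - (x / b) ^ 2 = (b ^ 2 - x ^ 2) / b ^ 2 := by field_simp
    rw [this, Real.sqrt_div' _ (by positivity), Real.sqrt_sq hb.le]
    field_simp
  refine (integrableOn_iff_integrable_of_support_subset fun t ht => ?_).1 h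
  by_contra hn
  refine ht ?_
  have : b ^ 2 - t ^ 2 ≤ 0 := by
    rw [mem_Ioc, not_and_or, not_lt, not_le] at hn
    rcases hn with h | h <;> nlinarith
  simp [Real.sqrt_eq_zero_of_nonpos this]

theorem inv_sqrt_eq_zero {b t : ℝ} (hb : 0 < b) (ht : t ≤ -b ∨ b ≤ t) :
    (√(b ^ 2 - t ^ 2))⁻¹ = 0 := by
  have : b ^ 2 - t ^ 2 ≤ 0 := by rcases ht with h | h <;> nlinarith
  simp [Real.sqrt_eq_zero_of_nonpos this]

theorem integrable_mul_inv_sqrt (b : ℝ) (hb : 0 < b) (p : ℝ → ℝ) (hp : Continuous p) :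
    Integrable fun t : ℝ => p t * (√(b ^ 2 - t ^ 2))⁻¹ := by
  refine (integrableOn_iff_integrable_of_support_subset (s := Icc (-b) b) fun t ht => ?_).1
    ((integrable_inv_sqrt b hb).integrableOn.continuousOn_mul hp.continuousOn isCompact_Icc)
  by_contra hn
  refine ht ?_
  have : t ≤ -b ∨ b ≤ t := by
    rw [mem_Icc, not_and_or, not_le, not_le] at hn
    exact hn.imp le_of_lt le_of_lt
  simp only [inv_sqrt_eq_zero hb this, mul_zero]

theorem measurableSet_far (s ε : ℝ) : MeasurableSet {t : ℝ | ε < |t - s|} :=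
  (isOpen_lt (by fun_prop) (by fun_prop)).measurableSet

/-- The principal value of an integrable function is its integral. -/
theorem tendsto_integral_far (s : ℝ) (g : ℝ → ℝ) (hg : Integrable g) :
    Tendsto (fun ε : ℝ => ∫ t in {t : ℝ | ε < |t - s|}, g t) (𝓝[>] 0) (𝓝 (∫ t, g t)) := by
  simp_rw [← integral_indicator (measurableSet_far s _)]
  refine tendsto_integral_filter_of_dominated_convergence (fun t => ‖g t‖)
    (Eventually.of_forall fun ε => hg.aestronglyMeasurable.indicator (measurableSet_far s ε))
    (Eventually.of_forall fun ε => ae_of_all _ fun t => norm_indicator_le_norm_self _ _)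
    hg.norm ?_
  have hne : ∀ᵐ t : ℝ, t ≠ s := by simp [ae_iff]
  filter_upwards [hne] with t ht
  have hpos : 0 < |t - s| := abs_pos.2 (sub_ne_zero.2 ht)
  refine tendsto_const_nhds.congr' ?_
  filter_upwards [mem_nhdsWithin_of_mem_nhds (Iio_mem_nhds hpos)] with ε hε
  rw [indicator_of_mem]
  exact hε

theorem integrableOn_cauchy (b s ε : ℝ) (hb : 0 < b) (hε : 0 < ε) :
    IntegrableOn (fun t : ℝ => (√(b ^ 2 - t ^ 2))⁻¹ * (s - t)⁻¹) {t : ℝ | ε < |t - s|} := by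
  refine Integrable.mono' ((integrable_inv_sqrt b hb).integrableOn.mul_const ε⁻¹) ?_ ?_
  · exact (by fun_prop : Measurable fun t : ℝ =>
      (√(b ^ 2 - t ^ 2))⁻¹ * (s - t)⁻¹).aestronglyMeasurable
  · refine (ae_restrict_iff' (measurableSet_far s ε)).2 (ae_of_all _ fun t ht => ?_)
    simp only [mem_ofPred_eq] at ht
    rw [norm_mul, Real.norm_of_nonneg (by positivity), norm_inv, Real.norm_eq_abs, abs_sub_comm]
    gcongr

/-- An antiderivative of `1 / (√(b² - t²) (s - t))`; the absolute value in `log |s - t|` is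
supplied by the convention `Real.log x = log |x|`. -/
def cauchyPrim (b s t : ℝ) : ℝ :=
  (√(b ^ 2 - s ^ 2))⁻¹ *
    (Real.log (b ^ 2 - s * t + √(b ^ 2 - s ^ 2) * √(b ^ 2 - t ^ 2)) - Real.log (s - t))

theorem cauchyPrim_arg_pos {b s t : ℝ} (hs : s ^ 2 < b ^ 2) (ht : t ^ 2 ≤ b ^ 2) :
    0 < b ^ 2 - s * t + √(b ^ 2 - s ^ 2) * √(b ^ 2 - t ^ 2) := by
  have : 0 ≤ √(b ^ 2 - s ^ 2) * √(b ^ 2 - t ^ 2) := by positivity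
  nlinarith [sq_nonneg (s - t)]

theorem continuousOn_cauchyPrim {b s : ℝ} (hs : s ^ 2 < b ^ 2) {S : Set ℝ}
    (h1 : ∀ t ∈ S, t ^ 2 ≤ b ^ 2) (h2 : ∀ t ∈ S, t ≠ s) : ContinuousOn (cauchyPrim b s) S := by
  unfold cauchyPrim
  refine continuousOn_const.mul (ContinuousOn.sub ?_ ?_)
  · exact ContinuousOn.log (by fun_prop) fun t ht => (cauchyPrim_arg_pos hs (h1 t ht)).ne'
  · exact ContinuousOn.log (by fun_prop) fun t ht => sub_ne_zero.2 (h2 t ht).symm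

theorem hasDerivAt_cauchyPrim {b s t : ℝ} (hs : s ^ 2 < b ^ 2) (ht : t ^ 2 < b ^ 2) (hts : t ≠ s) :
    HasDerivAt (cauchyPrim b s) ((√(b ^ 2 - t ^ 2))⁻¹ * (s - t)⁻¹) t := by
  have hN := cauchyPrim_arg_pos hs ht.le
  have hw : 0 < √(b ^ 2 - t ^ 2) := Real.sqrt_pos.2 (by linarith)
  have hc : 0 < √(b ^ 2 - s ^ 2) := Real.sqrt_pos.2 (by linarith)
  have hw2 : √(b ^ 2 - t ^ 2) ^ 2 = b ^ 2 - t ^ 2 := Real.sq_sqrt (by linarith)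
  have hc2 : √(b ^ 2 - s ^ 2) ^ 2 = b ^ 2 - s ^ 2 := Real.sq_sqrt (by linarith)
  have hst : s - t ≠ 0 := sub_ne_zero.2 hts.symm
  have d1 : HasDerivAt (fun t : ℝ => b ^ 2 - t ^ 2) (-(2 * t)) t := by
    simpa using ((hasDerivAt_id t).pow 2).const_sub (b ^ 2)
  have d2 := d1.sqrt (by linarith : b ^ 2 - t ^ 2 ≠ 0)
  have d3 : HasDerivAt (fun t : ℝ => b ^ 2 - s * t) (-s) t := by
    simpa using ((hasDerivAt_id t).const_mul s).const_sub (b ^ 2)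
  have d4 : HasDerivAt (fun t : ℝ => s - t) (-1) t := by
    simpa using (hasDerivAt_id t).const_sub s
  have d5 := (((d3.add (d2.const_mul (√(b ^ 2 - s ^ 2)))).log hN.ne').sub (d4.log hst)).const_mul
    (√(b ^ 2 - s ^ 2))⁻¹
  refine d5.congr_deriv ?_
  simp only [Pi.add_apply]
  generalize √(b ^ 2 - t ^ 2) = w at *
  generalize √(b ^ 2 - s ^ 2) = c at *
  have hN' := hN.ne'
  field_simp
  linear_combination -w * hc2 + c * hw2

/-- The two end-point values `cauchyPrim b s (±b)` agree, so only the values at the two edges of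
the excised interval survive. -/
theorem integral_cauchy_far {b s ε : ℝ} (hb : 0 < b) (hε : 0 < ε) (h1 : -b < s - ε)
    (h2 : s + ε < b) :
    ∫ t in {t : ℝ | ε < |t - s|}, (√(b ^ 2 - t ^ 2))⁻¹ * (s - t)⁻¹ =
      cauchyPrim b s (s - ε) - cauchyPrim b s (s + ε) := by
  have hs : s ^ 2 < b ^ 2 := by nlinarith
  have hI := integrableOn_cauchy b s ε hb hε
  have hsplit : {t : ℝ | ε < |t - s|} = Iio (s - ε) ∪ Ioi (s + ε) := by
    ext t
    simp only [mem_ofPred_eq, mem_union, mem_Iio, mem_Ioi, lt_abs]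
    constructor <;> rintro (h | h) <;> first | (left; linarith) | (right; linarith)
  rw [hsplit] at hI ⊢
  rw [setIntegral_union (by
    rw [Set.disjoint_left]
    intro t ht ht'
    simp only [mem_Iio, mem_Ioi] at ht ht'
    linarith) measurableSet_Ioi hI.left_of_union hI.right_of_union]
  have hl : ∫ t in Iio (s - ε), (√(b ^ 2 - t ^ 2))⁻¹ * (s - t)⁻¹ =
      cauchyPrim b s (s - ε) - cauchyPrim b s (-b) := by
    rw [setIntegral_eq_of_subset_of_forall_sdiff_eq_zero measurableSet_Iio
      (s := Ioo (-b) (s - ε)) (fun t ht => ht.2), ← integral_Ioc_eq_integral_Ioo,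
      ← intervalIntegral.integral_of_le h1.le]
    · refine intervalIntegral.integral_eq_sub_of_hasDerivAt_of_le h1.le
        (continuousOn_cauchyPrim hs (fun t ht => ?_) fun t ht => ?_) (fun t ht => ?_) ?_
      · nlinarith [ht.1, ht.2]
      · have := ht.2; intro h; linarith
      · refine hasDerivAt_cauchyPrim hs ?_ ?_
        · nlinarith [ht.1, ht.2]
        · have := ht.2; intro h; linarith
      · rw [intervalIntegrable_iff_integrableOn_Ioo_of_le h1.le]
        exact hI.left_of_union.mono_set fun t ht => ht.2
    · rintro t ⟨ht, ht'⟩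
      have : t ≤ -b := by
        by_contra h
        exact ht' ⟨not_le.1 h, ht⟩
      rw [inv_sqrt_eq_zero hb (Or.inl this), zero_mul]
  have hr : ∫ t in Ioi (s + ε), (√(b ^ 2 - t ^ 2))⁻¹ * (s - t)⁻¹ =
      cauchyPrim b s b - cauchyPrim b s (s + ε) := by
    rw [setIntegral_eq_of_subset_of_forall_sdiff_eq_zero measurableSet_Ioi
      (s := Ioo (s + ε) b) (fun t ht => ht.1), ← integral_Ioc_eq_integral_Ioo,
      ← intervalIntegral.integral_of_le h2.le]
    · refine intervalIntegral.integral_eq_sub_of_hasDerivAt_of_le h2.le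
        (continuousOn_cauchyPrim hs (fun t ht => ?_) fun t ht => ?_) (fun t ht => ?_) ?_
      · nlinarith [ht.1, ht.2]
      · have := ht.1; intro h; linarith
      · refine hasDerivAt_cauchyPrim hs ?_ ?_
        · nlinarith [ht.1, ht.2]
        · have := ht.1; intro h; linarith
      · rw [intervalIntegrable_iff_integrableOn_Ioo_of_le h2.le]
        exact hI.right_of_union.mono_set fun t ht => ht.1
    · rintro t ⟨ht, ht'⟩
      have : b ≤ t := by
        by_contra h
        exact ht' ⟨ht, not_le.1 h⟩
      rw [inv_sqrt_eq_zero hb (Or.inr this), zero_mul]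
  -- both endpoint values equal `log b / √(b² - s²)`
  have hend : cauchyPrim b s (-b) = cauchyPrim b s b := by
    have e1 : b ^ 2 - s * -b + √(b ^ 2 - s ^ 2) * √(b ^ 2 - (-b) ^ 2) = b * (s + b) := by
      simp; ring
    have e2 : b ^ 2 - s * b + √(b ^ 2 - s ^ 2) * √(b ^ 2 - b ^ 2) = b * (b - s) := by
      simp; ring
    have p1 : s + b ≠ 0 := by linarith
    have p2 : b - s ≠ 0 := by linarith
    rw [cauchyPrim, cauchyPrim, e1, e2, Real.log_mul hb.ne' p1, Real.log_mul hb.ne' p2,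
      sub_neg_eq_add, ← neg_sub b s, Real.log_neg_eq_log]
    ring
  rw [hl, hr, hend]
  ring

/-- The finite Hilbert transform of `1 / √(b² - t²)` vanishes inside `(-b, b)`: the logarithmic
singularities of the antiderivative at `s - ε` and `s + ε` cancel. -/
theorem pv_cauchy_eq_zero {b s : ℝ} (hb : 0 < b) (h1 : -b < s) (h2 : s < b) :
    Tendsto (fun ε : ℝ => ∫ t in {t : ℝ | ε < |t - s|}, (√(b ^ 2 - t ^ 2))⁻¹ * (s - t)⁻¹)
      (𝓝[>] 0) (𝓝 0) := by
  have hs : s ^ 2 < b ^ 2 := by nlinarith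
  set N : ℝ → ℝ := fun t =>
    Real.log (b ^ 2 - s * t + √(b ^ 2 - s ^ 2) * √(b ^ 2 - t ^ 2)) with hN
  have hNc : ContinuousAt N s :=
    ContinuousAt.log (by fun_prop) (cauchyPrim_arg_pos hs hs.le).ne'
  have hlim : Tendsto (fun ε : ℝ => (√(b ^ 2 - s ^ 2))⁻¹ * (N (s - ε) - N (s + ε)))
      (𝓝[>] 0) (𝓝 0) := by
    have c1 : Tendsto (fun ε : ℝ => N (s - ε)) (𝓝 0) (𝓝 (N s)) :=
      hNc.tendsto.comp (by simpa using (tendsto_const_nhds (x := s)).sub (tendsto_id (x := 𝓝 (0 : ℝ))))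
    have c2 : Tendsto (fun ε : ℝ => N (s + ε)) (𝓝 0) (𝓝 (N s)) :=
      hNc.tendsto.comp (by simpa using (tendsto_const_nhds (x := s)).add (tendsto_id (x := 𝓝 (0 : ℝ))))
    simpa using ((c1.sub c2).const_mul (√(b ^ 2 - s ^ 2))⁻¹).mono_left
      (nhdsWithin_le_nhds (s := Ioi (0 : ℝ)))
  refine hlim.congr' ?_
  filter_upwards [self_mem_nhdsWithin,
    mem_nhdsWithin_of_mem_nhds (Iio_mem_nhds (by linarith : (0 : ℝ) < s + b)),
    mem_nhdsWithin_of_mem_nhds (Iio_mem_nhds (by linarith : (0 : ℝ) < b - s))] with ε e0 e1 e2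
  simp only [mem_Iio, mem_Ioi] at e0 e1 e2
  rw [integral_cauchy_far hb e0 (by linarith) (by linarith), cauchyPrim, cauchyPrim,
    sub_sub_cancel, sub_add_cancel_left, Real.log_neg_eq_log]
  ring

/-- Write `√(b² - t²) ^ (2k+1) = (b² - t²) ^ (k+1) / √(b² - t²)` and subtract the value
`(b² - s²) ^ (k+1)`: the difference is divisible by `s - t`, and the subtracted term contributes
nothing by `pv_cauchy_eq_zero`. -/
theorem pvHilbert_sqrt_pow {b s C : ℝ} (k : ℕ) (hb : 0 < b) (h1 : -b < s) (h2 : s < b) :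
    pvHilbert (fun t => C * √(b ^ 2 - t ^ 2) ^ (2 * k + 1)) s =
      Real.pi⁻¹ * (C * ∑ i ∈ Finset.range (k + 1), (b ^ 2 - s ^ 2) ^ (k - i) *
        (s * (∫ t, (b ^ 2 - t ^ 2) ^ i * (√(b ^ 2 - t ^ 2))⁻¹) +
          ∫ t, (t * (b ^ 2 - t ^ 2) ^ i) * (√(b ^ 2 - t ^ 2))⁻¹)) := by
  have hs : s ^ 2 < b ^ 2 := by nlinarith
  set q : ℝ → ℝ := fun t => ∑ i ∈ Finset.range (k + 1), (b ^ 2 - s ^ 2) ^ (k - i) *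
        (s * ((b ^ 2 - t ^ 2) ^ i * (√(b ^ 2 - t ^ 2))⁻¹) +
          (t * (b ^ 2 - t ^ 2) ^ i) * (√(b ^ 2 - t ^ 2))⁻¹) with hq
  have i1 : ∀ i : ℕ, Integrable fun t : ℝ => (b ^ 2 - t ^ 2) ^ i * (√(b ^ 2 - t ^ 2))⁻¹ :=
    fun i => integrable_mul_inv_sqrt b hb _ (by fun_prop)
  have i2 : ∀ i : ℕ, Integrable fun t : ℝ => (t * (b ^ 2 - t ^ 2) ^ i) * (√(b ^ 2 - t ^ 2))⁻¹ :=
    fun i => integrable_mul_inv_sqrt b hb _ (by fun_prop)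
  have i3 : ∀ i ∈ Finset.range (k + 1), Integrable fun t : ℝ => (b ^ 2 - s ^ 2) ^ (k - i) *
        (s * ((b ^ 2 - t ^ 2) ^ i * (√(b ^ 2 - t ^ 2))⁻¹) +
          (t * (b ^ 2 - t ^ 2) ^ i) * (√(b ^ 2 - t ^ 2))⁻¹) :=
    fun i _ => (((i1 i).const_mul s).add (i2 i)).const_mul _
  have hqi : Integrable q := integrable_finsetSum _ i3
  have hqint : ∫ t, q t = ∑ i ∈ Finset.range (k + 1), (b ^ 2 - s ^ 2) ^ (k - i) *
        (s * (∫ t, (b ^ 2 - t ^ 2) ^ i * (√(b ^ 2 - t ^ 2))⁻¹) +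
          ∫ t, (t * (b ^ 2 - t ^ 2) ^ i) * (√(b ^ 2 - t ^ 2))⁻¹) := by
    rw [hq, integral_finsetSum _ i3]
    refine Finset.sum_congr rfl fun i _ => ?_
    rw [integral_const_mul, integral_add ((i1 i).const_mul s) (i2 i), integral_const_mul]
  -- subtracting the value of `(b² - t²)^(k+1)` at `t = s` leaves a multiple of `s - t`
  have key : ∀ t, t ≠ s → C * √(b ^ 2 - t ^ 2) ^ (2 * k + 1) / (s - t) =
      C * (b ^ 2 - s ^ 2) ^ (k + 1) * ((√(b ^ 2 - t ^ 2))⁻¹ * (s - t)⁻¹) + C * q t := by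
    intro t ht
    have hst : s - t ≠ 0 := sub_ne_zero.2 ht.symm
    have hgeom := geom_sum₂_mul (b ^ 2 - t ^ 2) (b ^ 2 - s ^ 2) (k + 1)
    simp only [Nat.add_sub_cancel] at hgeom
    have hq' : q t = (s + t) * (∑ i ∈ Finset.range (k + 1),
        (b ^ 2 - t ^ 2) ^ i * (b ^ 2 - s ^ 2) ^ (k - i)) * (√(b ^ 2 - t ^ 2))⁻¹ := by
      rw [hq, Finset.mul_sum, Finset.sum_mul]
      exact Finset.sum_congr rfl fun i _ => by ring
    have hgeom' : (s - t) * q t =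
        ((b ^ 2 - t ^ 2) ^ (k + 1) - (b ^ 2 - s ^ 2) ^ (k + 1)) * (√(b ^ 2 - t ^ 2))⁻¹ := by
      rw [hq', ← hgeom]
      ring
    have hw : √(b ^ 2 - t ^ 2) ^ (2 * k + 1) =
        (b ^ 2 - t ^ 2) ^ (k + 1) * (√(b ^ 2 - t ^ 2))⁻¹ := by
      rcases le_or_gt (b ^ 2 - t ^ 2) 0 with h | h
      · simp [Real.sqrt_eq_zero_of_nonpos h]
      · have hpos := Real.sqrt_pos.2 h
        conv_rhs => rw [← Real.sq_sqrt h.le]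
        rw [Real.sqrt_sq hpos.le]
        field_simp
        ring
    have : q t = ((b ^ 2 - t ^ 2) ^ (k + 1) - (b ^ 2 - s ^ 2) ^ (k + 1)) *
        (√(b ^ 2 - t ^ 2))⁻¹ * (s - t)⁻¹ := by
      rw [← hgeom']
      field_simp
    rw [this, hw]
    ring
  have hlim : Tendsto (fun ε : ℝ => ∫ t in {t : ℝ | ε < |t - s|},
      C * √(b ^ 2 - t ^ 2) ^ (2 * k + 1) / (s - t)) (𝓝[>] 0) (𝓝 (C * ∫ t, q t)) := by
    have := ((pv_cauchy_eq_zero hb h1 h2).const_mul (C * (b ^ 2 - s ^ 2) ^ (k + 1))).add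
      ((tendsto_integral_far s q hqi).const_mul C)
    rw [mul_zero, zero_add] at this
    refine this.congr' ?_
    filter_upwards [self_mem_nhdsWithin] with ε hε
    simp only [mem_Ioi] at hε
    rw [← integral_const_mul, ← integral_const_mul,
      ← integral_add ((integrableOn_cauchy b s ε hb hε).const_mul _)
        (hqi.integrableOn.const_mul C)]
    refine setIntegral_congr_fun (measurableSet_far s ε) fun t ht => ?_
    refine (key t ?_).symm
    rintro rfl
    simp only [mem_ofPred_eq, sub_self, abs_zero] at ht
    linarith
  rw [pvHilbert, hlim.limUnder_eq, hqint]

open Polynomial in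
theorem exists_polynomial_pvHilbert {b : ℝ} (C : ℝ) (k : ℕ) (hb : 0 < b) :
    ∃ P : ℝ[X], P.natDegree < 2 * k + 2 ∧ ∀ s, -b < s → s < b →
      pvHilbert (fun t => C * √(b ^ 2 - t ^ 2) ^ (2 * k + 1)) s = P.eval s := by
  refine ⟨Polynomial.C (Real.pi⁻¹) * (Polynomial.C C * ∑ i ∈ Finset.range (k + 1),
    (Polynomial.C (b ^ 2) - X ^ 2) ^ (k - i) *
      (X * Polynomial.C (∫ t, (b ^ 2 - t ^ 2) ^ i * (√(b ^ 2 - t ^ 2))⁻¹) +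
        Polynomial.C (∫ t, (t * (b ^ 2 - t ^ 2) ^ i) * (√(b ^ 2 - t ^ 2))⁻¹))), ?_, ?_⟩
  · refine Nat.lt_succ_of_le ?_
    refine (natDegree_C_mul_le _ _).trans ((natDegree_C_mul_le _ _).trans ?_)
    refine natDegree_sum_le_of_forall_le _ _ fun i hi => ?_
    have e1 : (Polynomial.C (b ^ 2) - X ^ 2 : ℝ[X]).natDegree ≤ 2 := by compute_degree
    have e2 := natDegree_pow_le_of_le (k - i) e1
    refine (natDegree_mul_le_of_le e2 (n := 1) (by compute_degree)).trans ?_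
    omega
  · intro s h1 h2
    rw [pvHilbert_sqrt_pow k hb h1 h2]
    simp [eval_finsetSum, mul_comm s]

open Polynomial in
theorem contDiff_polynomial_eval (P : ℝ[X]) (n : WithTop ℕ∞) : ContDiff ℝ n fun s => P.eval s := by
  simpa using P.contDiff_aeval (𝕜 := ℝ) n

open Polynomial in
theorem iteratedDeriv_polynomial_eq_zero (P : ℝ[X]) (n : ℕ) (h : P.natDegree < n) (x : ℝ) :
    iteratedDeriv n (fun s => P.eval s) x = 0 := by
  have : ∀ m : ℕ, ∀ Q : ℝ[X], deriv^[m] (fun s => Q.eval s) =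
      fun s => (derivative^[m] Q).eval s := by
    intro m
    induction m with
    | zero => intro Q; rfl
    | succ m ih =>
      intro Q
      rw [Function.iterate_succ_apply, Function.iterate_succ_apply, ← ih]
      congr 1
      ext s
      exact Q.deriv
  rw [iteratedDeriv_eq_iterate, this, iterate_derivative_eq_zero h]
  simp

/-! ### Position of `s⋆` -/

/-- The number `s⋆` is the height `⟨ω⋆, (x₀ + x₁)/2⟩` of the midpoint, which lies in the
ellipsoid, so `|s⋆| < |Aω⋆|` by Cauchy–Schwarz. -/
theorem sStar_sq_lt (n : ℕ) (a : Fin n → ℝ) (ha : ∀ i, 0 < a i) (x₀ x₁ : En n)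
    (h₀ : ∑ i, (x₀ i / a i) ^ 2 < 1) (h₁ : ∑ i, (x₁ i / a i) ^ 2 < 1) (hne : x₀ ≠ x₁) :
    sStar n x₀ x₁ ^ 2 < ∑ i, (a i * omegaStar n x₀ x₁ i) ^ 2 := by
  set ω := omegaStar n x₀ x₁ with hω
  have hd : 0 < ‖x₁ - x₀‖ := norm_pos_iff.2 (sub_ne_zero.2 hne.symm)
  have hs : sStar n x₀ x₁ = ∑ i, (a i * ω i) * ((x₀ i + x₁ i) / 2 / a i) := by
    have e : sStar n x₀ x₁ = ⟪ω, (2 : ℝ)⁻¹ • (x₀ + x₁)⟫ := by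
      have : ⟪x₁ - x₀, x₀ + x₁⟫ = ‖x₁‖ ^ 2 - ‖x₀‖ ^ 2 := by
        rw [inner_sub_left, inner_add_right, inner_add_right, real_inner_self_eq_norm_sq,
          real_inner_self_eq_norm_sq, real_inner_comm x₀ x₁]
        ring
      rw [hω, omegaStar, inner_smul_left, inner_smul_right, this, sStar]
      simp
      field_simp
    rw [e, PiLp.inner_apply]
    refine Finset.sum_congr rfl fun i _ => ?_
    have := (ha i).ne'
    simp
    field_simp
  have hωne : ω ≠ 0 := smul_ne_zero (inv_ne_zero hd.ne') (sub_ne_zero.2 hne.symm)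
  have hB : 0 < ∑ i, (a i * ω i) ^ 2 := by
    obtain ⟨i, hi⟩ : ∃ i, ω i ≠ 0 := by
      by_contra! h
      exact hωne (by ext i; simpa using h i)
    refine Finset.sum_pos' (fun i _ => sq_nonneg _) ⟨i, Finset.mem_univ _, ?_⟩
    have := (ha i).ne'
    positivity
  have hmid : ∑ i, ((x₀ i + x₁ i) / 2 / a i) ^ 2 < 1 := by
    have : ∑ i, ((x₀ i + x₁ i) / 2 / a i) ^ 2 ≤
        ∑ i, ((x₀ i / a i) ^ 2 / 2 + (x₁ i / a i) ^ 2 / 2) := by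
      refine Finset.sum_le_sum fun i _ => ?_
      have : (x₀ i + x₁ i) / 2 / a i = (x₀ i / a i + x₁ i / a i) / 2 := by ring
      rw [this]
      nlinarith [sq_nonneg (x₀ i / a i - x₁ i / a i)]
    rw [Finset.sum_add_distrib, ← Finset.sum_div, ← Finset.sum_div] at this
    linarith
  have hcs := Finset.sum_mul_sq_le_sq_mul_sq Finset.univ (fun i => a i * ω i)
    (fun i => (x₀ i + x₁ i) / 2 / a i)
  rw [← hs] at hcs
  nlinarith

/-- Theorem (vanishing of the kernel `k_Ω` for elliptical domains, even dimension). -/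
theorem kernel_vanishes_elliptical_even
    (n : ℕ) (hn2 : 2 ≤ n) (hneven : Even n)
    (a : Fin n → ℝ) (ha : ∀ i, 0 < a i) :
    let Ω : Set (En n) := {x : En n | ∑ i, (x i / a i) ^ 2 < 1}
    (∀ x₀ ∈ Ω, ∀ x₁ ∈ Ω, x₀ ≠ x₁ →
      ContDiffAt ℝ (n : ℕ∞) (pvHilbert (radonChi n Ω (omegaStar n x₀ x₁))) (sStar n x₀ x₁) ∧
      iteratedDeriv n (pvHilbert (radonChi n Ω (omegaStar n x₀ x₁))) (sStar n x₀ x₁) = 0 ∧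
      kernEven n Ω x₀ x₁ = 0) ∧
    ∀ f : En n → ℝ, tsupport f ⊆ Ω → ∀ x₀ ∈ Ω, Kop n Ω (kernEven n Ω) f x₀ = 0 := by
  intro Ω
  obtain ⟨k, rfl⟩ : ∃ k, n = 2 * k + 2 := by
    obtain ⟨m, rfl⟩ := hneven
    exact ⟨m - 1, by omega⟩
  have main : ∀ x₀ ∈ Ω, ∀ x₁ ∈ Ω, x₀ ≠ x₁ →
      ContDiffAt ℝ ((2 * k + 2 : ℕ) : ℕ∞)
        (pvHilbert (radonChi (2 * k + 2) Ω (omegaStar (2 * k + 2) x₀ x₁)))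
        (sStar (2 * k + 2) x₀ x₁) ∧
      iteratedDeriv (2 * k + 2)
        (pvHilbert (radonChi (2 * k + 2) Ω (omegaStar (2 * k + 2) x₀ x₁)))
        (sStar (2 * k + 2) x₀ x₁) = 0 := by
    intro x₀ h₀ x₁ h₁ hne
    have hω : omegaStar (2 * k + 2) x₀ x₁ ≠ 0 :=
      smul_ne_zero (inv_ne_zero (norm_ne_zero_iff.2 (sub_ne_zero.2 hne.symm)))
        (sub_ne_zero.2 hne.symm)
    have hs := sStar_sq_lt _ a ha x₀ x₁ h₀ h₁ hne
    obtain ⟨C, hC⟩ := radonChi_ellipsoid k a ha _ hω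
    set B := ∑ i, (a i * omegaStar (2 * k + 2) x₀ x₁ i) ^ 2 with hB
    have hBpos : 0 < B := lt_of_le_of_lt (sq_nonneg _) hs
    have hb2 : √B ^ 2 = B := Real.sq_sqrt hBpos.le
    have hφ : radonChi (2 * k + 2) Ω (omegaStar (2 * k + 2) x₀ x₁) =
        fun t => C * √(√B ^ 2 - t ^ 2) ^ (2 * k + 1) := by
      rw [hb2]
      exact funext hC
    obtain ⟨P, hdeg, hP⟩ := exists_polynomial_pvHilbert C k (Real.sqrt_pos.2 hBpos)
    have hsb := abs_lt.1 (Real.lt_sqrt_of_sq_lt (by rwa [sq_abs]))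
    have hev : pvHilbert (radonChi (2 * k + 2) Ω (omegaStar (2 * k + 2) x₀ x₁)) =ᶠ[
        𝓝 (sStar (2 * k + 2) x₀ x₁)] fun s => P.eval s := by
      rw [hφ]
      filter_upwards [Ioo_mem_nhds hsb.1 hsb.2] with s hs
      exact hP s hs.1 hs.2
    exact ⟨(contDiff_polynomial_eval P _).contDiffAt.congr_of_eventuallyEq hev,
      (hev.iteratedDeriv_eq _).trans (iteratedDeriv_polynomial_eq_zero P _ hdeg _)⟩
  have hker : ∀ x₀ ∈ Ω, ∀ x₁ ∈ Ω, kernEven (2 * k + 2) Ω x₀ x₁ = 0 := by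
    intro x₀ h₀ x₁ h₁
    rcases eq_or_ne x₀ x₁ with rfl | hne
    · -- on the diagonal the kernel is a quotient by zero
      simp [kernEven]
    · rw [kernEven, (main x₀ h₀ x₁ h₁ hne).2]
      simp
  refine ⟨fun x₀ h₀ x₁ h₁ hne => ⟨(main x₀ h₀ x₁ h₁ hne).1, (main x₀ h₀ x₁ h₁ hne).2,
    hker x₀ h₀ x₁ h₁⟩, fun f _ x₀ h₀ => ?_⟩
  exact setIntegral_eq_zero_of_forall_eq_zero fun x₁ h₁ => by rw [hker x₀ h₀ x₁ h₁, zero_mul]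

end
end

section
/- Let n ≥ 2 be an even integer. There exists a polynomial q of degree at most n − 1 such that for every ŝ ∈ (−1,1), the principal value lim_{ε→0} ∫_{{t ∈ [−1,1] : |t − ŝ| > ε}} (1 − t²)^{(n−1)/2} / (ŝ − t) dt exists and equals q(ŝ). Consequently, the Hilbert transform h of the function s ↦ (1−s²)^{(n−1)/2}·χ_{[−1,1]}(s) is a polynomial of degree at most n − 1 on (−1,1), and its n-th derivative vanishes identically on (−1,1). -/
/-!
With `n = 2 m + 2` the profile is `(1 - t²)^m √(1 - t²)`. For `m = 0` the integrand
`√(1 - t²) / (s - t)` has the elementary primitive `semicirclePrim s` on either side of `s`. Its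
singular part is a multiple of `log |s - t|`, which is even around `s`, so the boundary terms at
`s ± ε` cancel in the limit, and the endpoints `±1` contribute `π s` (`tendsto_semicircle`).

The identity `1 - t² = (1 - s²) + (s - t) (s + t)` gives the induction step (`exists_poly`): if
`q` is the principal value for the power `m`, the one for `m + 1` is
`(1 - s²) q(s) + ∫ (s + t) (1 - t²)^m √(1 - t²) dt`. The added integral is affine in `s`, so the
degree grows by two at each step and stays at most `2 m + 1 = n - 1`.
-/

open MeasureTheory Filter Metric Set
open scoped Topology ENNReal RealInnerProductSpace NNReal

noncomputable section

/-! ### Truncated integrals -/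

/-- The interval `[-1, 1]` with the `ε`-neighbourhood of `s` removed: the domain of the truncated
integrals defining the principal value. -/
def cutInterval (s ε : ℝ) : Set ℝ := {t : ℝ | t ∈ Icc (-1 : ℝ) 1 ∧ ε < |t - s|}

lemma measurableSet_cutInterval (s ε : ℝ) : MeasurableSet (cutInterval s ε) :=
  measurableSet_Icc.inter (measurableSet_lt measurable_const
    (by fun_prop : Measurable fun t : ℝ => |t - s|))

/-- Away from the singularity the Cauchy kernel is integrable against any continuous function. -/
lemma integrableOn_cut {f : ℝ → ℝ} (hf : Continuous f) (s : ℝ) {ε : ℝ} (hε : 0 < ε) :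
    IntegrableOn (fun t => f t / (s - t)) (cutInterval s ε) := by
  have hK : IsCompact (Icc (-1 : ℝ) 1 ∩ {t | ε ≤ |t - s|}) :=
    isCompact_Icc.inter_right (isClosed_le continuous_const (by fun_prop))
  refine (ContinuousOn.integrableOn_compact hK ?_).mono_set
    fun t ht => ⟨ht.1, ht.2.le⟩
  refine hf.continuousOn.div (by fun_prop) fun t ht h => ?_
  have h1 : t - s = 0 := by linarith
  have h2 : ε ≤ |t - s| := ht.2
  rw [h1, abs_zero] at h2
  linarith

/-- For a continuous integrand the truncated integrals converge to the full integral. -/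
lemma tendsto_cut_of_continuous {f : ℝ → ℝ} (hf : Continuous f) (s : ℝ) :
    Tendsto (fun ε => ∫ t in cutInterval s ε, f t) (𝓝[>] (0 : ℝ))
      (𝓝 (∫ t in Icc (-1 : ℝ) 1, f t)) := by
  have hmeas := measurableSet_cutInterval s
  simp_rw [← fun ε => integral_indicator (f := f) (μ := volume) (hmeas ε)]
  rw [← integral_indicator measurableSet_Icc]
  have hint : Integrable ((Icc (-1 : ℝ) 1).indicator f) :=
    (hf.continuousOn.integrableOn_compact isCompact_Icc).integrable_indicator measurableSet_Icc
  refine tendsto_integral_filter_of_dominated_convergence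
    (fun t => ‖(Icc (-1 : ℝ) 1).indicator f t‖) ?_ ?_ hint.norm ?_
  · exact .of_forall fun ε => (hf.measurable.indicator (hmeas ε)).aestronglyMeasurable
  · refine .of_forall fun ε => .of_forall fun t => ?_
    exact norm_indicator_le_of_subset (fun t ht => ht.1) f t
  · have hne : ∀ᵐ t : ℝ, t ≠ s := by simp [ae_iff]
    filter_upwards [hne] with t ht
    have hpos : 0 < |t - s| := abs_pos.2 (sub_ne_zero.2 ht)
    refine tendsto_const_nhds.congr' ?_
    filter_upwards [mem_nhdsWithin_of_mem_nhds (Iio_mem_nhds hpos)] with ε hε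
    have hε : ε < |t - s| := hε
    by_cases h : t ∈ Icc (-1 : ℝ) 1
    · rw [indicator_of_mem h, indicator_of_mem (show t ∈ cutInterval s ε from ⟨h, hε⟩)]
    · rw [indicator_of_notMem h, indicator_of_notMem fun h' => h h'.1]

/-- The truncated domain splits at the singularity into two intervals. -/
lemma integral_cut_eq {f : ℝ → ℝ} (hf : Continuous f) {s ε : ℝ} (hε : 0 < ε)
    (h1 : -1 ≤ s - ε) (h2 : s + ε ≤ 1) :
    ∫ t in cutInterval s ε, f t / (s - t) =
      (∫ t in (-1 : ℝ)..(s - ε), f t / (s - t)) + ∫ t in (s + ε)..1, f t / (s - t) := by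
  have hset : cutInterval s ε = Ico (-1) (s - ε) ∪ Ioc (s + ε) 1 := by
    ext t
    simp only [cutInterval, mem_ofPred_eq, mem_Icc, mem_union, mem_Ico, mem_Ioc, lt_abs]
    constructor
    · rintro ⟨⟨ha, hb⟩, h | h⟩
      · exact Or.inr ⟨by linarith, hb⟩
      · exact Or.inl ⟨ha, by linarith⟩
    · rintro (⟨ha, hb⟩ | ⟨ha, hb⟩)
      · exact ⟨⟨ha, by linarith⟩, Or.inr (by linarith)⟩
      · exact ⟨⟨by linarith, hb⟩, Or.inl (by linarith)⟩
  have hint := integrableOn_cut hf s hε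
  rw [hset] at hint ⊢
  rw [setIntegral_union ?_ measurableSet_Ioc hint.left_of_union hint.right_of_union,
    intervalIntegral.integral_of_le h1, intervalIntegral.integral_of_le h2,
    integral_Ico_eq_integral_Ioc (x := -1)]
  refine Set.disjoint_left.2 fun t ht ht' => ?_
  have := ht.2
  have := ht'.1
  linarith

/-! ### The Hilbert transform of the semicircle -/

/-- A primitive of `t ↦ √(1 - t²) / (s - t)` on each side of `s`; recall that `Real.log x` is
`log |x|` for negative `x`. It comes from
`√(1 - t²) / (s - t) = (s + t) / √(1 - t²) + (1 - s²) / ((s - t) √(1 - t²))`. -/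
def semicirclePrim (s t : ℝ) : ℝ :=
  s * Real.arcsin t - √(1 - t ^ 2) +
    √(1 - s ^ 2) * (Real.log (1 - s * t + √(1 - s ^ 2) * √(1 - t ^ 2)) - Real.log (s - t))

lemma log_arg_pos {s t : ℝ} (hs : s ∈ Ioo (-1 : ℝ) 1) (ht : t ∈ Icc (-1 : ℝ) 1) :
    0 < 1 - s * t + √(1 - s ^ 2) * √(1 - t ^ 2) := by
  have h : 0 ≤ √(1 - s ^ 2) * √(1 - t ^ 2) := by positivity
  have : s * t < 1 := by
    obtain ⟨a, b⟩ := hs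
    obtain ⟨c, d⟩ := ht
    have h1 := mul_nonneg (sub_nonneg.2 b.le) (show 0 ≤ 1 + t by linarith)
    have h2 := mul_nonneg (show 0 ≤ 1 + s by linarith) (sub_nonneg.2 d)
    nlinarith
  linarith

lemma continuousOn_semicirclePrim {s : ℝ} (hs : s ∈ Ioo (-1 : ℝ) 1) {A : Set ℝ}
    (hA : A ⊆ Icc (-1 : ℝ) 1) (hsA : s ∉ A) : ContinuousOn (semicirclePrim s) A := by
  unfold semicirclePrim
  have h1 : ContinuousOn
      (fun t => Real.log (1 - s * t + √(1 - s ^ 2) * √(1 - t ^ 2))) A :=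
    ContinuousOn.log (by fun_prop) fun t ht => (log_arg_pos hs (hA ht)).ne'
  have h2 : ContinuousOn (fun t => Real.log (s - t)) A :=
    ContinuousOn.log (by fun_prop) fun t ht h => hsA (by rwa [sub_eq_zero.1 h])
  have h3 := Real.continuous_arcsin
  fun_prop

lemma hasDerivAt_semicirclePrim {s t : ℝ} (hs : s ∈ Ioo (-1 : ℝ) 1) (ht : t ∈ Ioo (-1 : ℝ) 1)
    (hst : t ≠ s) : HasDerivAt (semicirclePrim s) (√(1 - t ^ 2) / (s - t)) t := by
  have hpt : 0 < 1 - t ^ 2 := by nlinarith [ht.1, ht.2]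
  have hps : 0 < 1 - s ^ 2 := by nlinarith [hs.1, hs.2]
  have hL := log_arg_pos hs (Ioo_subset_Icc_self ht)
  have hw : HasDerivAt (fun t : ℝ => √(1 - t ^ 2)) (-t / √(1 - t ^ 2)) t := by
    have h : HasDerivAt (fun t : ℝ => √(1 - t ^ 2)) (-(2 * t) / (2 * √(1 - t ^ 2))) t := by
      refine HasDerivAt.sqrt ?_ hpt.ne'
      simpa using (hasDerivAt_pow 2 t).const_sub 1
    rwa [← mul_neg, mul_div_mul_left _ _ two_ne_zero] at h
  have hst' : s - t ≠ 0 := sub_ne_zero.2 hst.symm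
  have h1 : HasDerivAt (fun t => Real.log (1 - s * t + √(1 - s ^ 2) * √(1 - t ^ 2)))
      ((-(s * 1) + √(1 - s ^ 2) * (-t / √(1 - t ^ 2))) /
        (1 - s * t + √(1 - s ^ 2) * √(1 - t ^ 2))) t :=
    ((((hasDerivAt_id t).const_mul s).const_sub 1).add (hw.const_mul √(1 - s ^ 2))).log hL.ne'
  have h2 : HasDerivAt (fun t => Real.log (s - t)) (-1 / (s - t)) t :=
    ((hasDerivAt_id t).const_sub s).log hst'
  have h3 := (Real.hasDerivAt_arcsin ht.1.ne' ht.2.ne).const_mul s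
  refine HasDerivAt.congr_deriv
    (f := semicirclePrim s) ((h3.sub hw).add ((h1.sub h2).const_mul √(1 - s ^ 2))) ?_
  have hL' := hL.ne'
  have ewt := Real.sq_sqrt hpt.le
  have ews := Real.sq_sqrt hps.le
  have pwt := Real.sqrt_pos.2 hpt
  set w := √(1 - t ^ 2)
  set a := √(1 - s ^ 2)
  -- the logarithmic part of the primitive has derivative `a / (w (s - t))`
  have key : (-(s * 1) + a * (-t / w)) / (1 - s * t + a * w) - -1 / (s - t) =
      a / (w * (s - t)) := by
    field_simp
    linear_combination a * ewt - w * ews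
  rw [key]
  field_simp
  linear_combination ews - ewt

/-- `semicirclePrim s` is even around its logarithmic singularity up to a continuous function, so
the two boundary terms at `s ± ε` cancel in the limit. -/
lemma tendsto_semicirclePrim_sub {s : ℝ} (hs : s ∈ Ioo (-1 : ℝ) 1) :
    Tendsto (fun ε => semicirclePrim s (s - ε) - semicirclePrim s (s + ε))
      (𝓝[>] (0 : ℝ)) (𝓝 0) := by
  set R : ℝ → ℝ := fun t => s * Real.arcsin t - √(1 - t ^ 2) +
    √(1 - s ^ 2) * Real.log (1 - s * t + √(1 - s ^ 2) * √(1 - t ^ 2)) with hR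
  have hRc : ContinuousAt R s := by
    have h1 : ContinuousAt
        (fun t => Real.log (1 - s * t + √(1 - s ^ 2) * √(1 - t ^ 2))) s :=
      ContinuousAt.log (by fun_prop) (log_arg_pos hs (Ioo_subset_Icc_self hs)).ne'
    have h3 := Real.continuous_arcsin
    fun_prop
  have hRm : Tendsto (fun ε : ℝ => R (s - ε)) (𝓝 0) (𝓝 (R s)) :=
    hRc.tendsto.comp (Continuous.tendsto' (by fun_prop) _ _ (by simp))
  have hRp : Tendsto (fun ε : ℝ => R (s + ε)) (𝓝 0) (𝓝 (R s)) :=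
    hRc.tendsto.comp (Continuous.tendsto' (by fun_prop) _ _ (by simp))
  have h := (hRm.sub hRp).mono_left (nhdsWithin_le_nhds (s := Ioi (0 : ℝ)))
  rw [sub_self] at h
  refine h.congr fun ε => ?_
  simp only [hR, semicirclePrim]
  rw [show s - (s + ε) = -(s - (s - ε)) by ring, Real.log_neg_eq_log]
  ring

lemma semicirclePrim_one {s : ℝ} : semicirclePrim s 1 = s * (Real.pi / 2) := by
  rw [semicirclePrim, mul_one, ← Real.log_neg_eq_log (s - 1), neg_sub]
  simp

lemma semicirclePrim_neg_one {s : ℝ} : semicirclePrim s (-1) = -(s * (Real.pi / 2)) := by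
  rw [semicirclePrim, mul_neg_one, sub_neg_eq_add, sub_neg_eq_add, add_comm 1 s]
  simp

/-- The Hilbert transform of the semicircle is linear: `p.v. ∫ √(1 - t²) / (s - t) dt = π s`. -/
lemma tendsto_semicircle {s : ℝ} (hs : s ∈ Ioo (-1 : ℝ) 1) :
    Tendsto (fun ε => ∫ t in cutInterval s ε, √(1 - t ^ 2) / (s - t)) (𝓝[>] (0 : ℝ))
      (𝓝 (Real.pi * s)) := by
  have hlim := (tendsto_semicirclePrim_sub hs).const_add (Real.pi * s)
  rw [add_zero] at hlim
  refine hlim.congr' ?_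
  have hr : 0 < min (1 + s) (1 - s) := lt_min (by linarith [hs.1]) (by linarith [hs.2])
  filter_upwards [Ioo_mem_nhdsGT hr] with ε hε
  obtain ⟨hε0, hε⟩ := hε
  have h1 : -1 < s - ε := by linarith [(lt_min_iff.1 hε).1]
  have h2 : s + ε < 1 := by linarith [(lt_min_iff.1 hε).2]
  have hcont : Continuous fun t : ℝ => √(1 - t ^ 2) := by fun_prop
  have hFTC : ∀ a b : ℝ, a ≤ b → -1 ≤ a → b ≤ 1 → s ∉ Icc a b →
      ∫ t in a..b, √(1 - t ^ 2) / (s - t) = semicirclePrim s b - semicirclePrim s a := by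
    intro a b hab ha hb hsab
    refine intervalIntegral.integral_eq_sub_of_hasDerivAt_of_le hab
      (continuousOn_semicirclePrim hs (Icc_subset_Icc ha hb) hsab) (fun t ht => ?_) ?_
    · refine hasDerivAt_semicirclePrim hs ⟨by linarith [ht.1], by linarith [ht.2]⟩ ?_
      rintro rfl
      exact hsab (Ioo_subset_Icc_self ht)
    · refine ContinuousOn.intervalIntegrable_of_Icc hab
        (hcont.continuousOn.div (by fun_prop) fun t ht h => hsab ?_)
      rwa [sub_eq_zero.1 h]
  rw [integral_cut_eq hcont hε0 h1.le h2.le,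
    hFTC _ _ h1.le le_rfl (by linarith) (fun h => by linarith [h.2]),
    hFTC _ _ h2.le (by linarith) le_rfl (fun h => by linarith [h.1]),
    semicirclePrim_one, semicirclePrim_neg_one]
  ring

/-! ### Higher powers of `1 - t²` -/

/-- Induction on the power, from `1 - t² = (1 - s²) + (s - t) (s + t)`: raising the power by one
multiplies the principal value by `1 - s²` and adds a convergent integral affine in `s`. -/
lemma exists_poly (m : ℕ) : ∃ q : Polynomial ℝ, q.natDegree ≤ 2 * m + 1 ∧
    ∀ s ∈ Ioo (-1 : ℝ) 1,
      Tendsto (fun ε => ∫ t in cutInterval s ε, (1 - t ^ 2) ^ m * √(1 - t ^ 2) / (s - t))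
        (𝓝[>] (0 : ℝ)) (𝓝 (q.eval s)) := by
  induction m with
  | zero =>
    refine ⟨Polynomial.C Real.pi * Polynomial.X, ?_, fun s hs => ?_⟩
    · exact (Polynomial.natDegree_C_mul_le _ _).trans Polynomial.natDegree_X_le
    · simpa using tendsto_semicircle hs
  | succ m ih =>
    obtain ⟨q, hdeg, hq⟩ := ih
    set g : ℝ → ℝ := fun t => (1 - t ^ 2) ^ m * √(1 - t ^ 2) with hg
    have hgc : Continuous g := by fun_prop
    refine ⟨(1 - Polynomial.X ^ 2) * q +
      (Polynomial.X * Polynomial.C (∫ t in Icc (-1 : ℝ) 1, g t) +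
        Polynomial.C (∫ t in Icc (-1 : ℝ) 1, t * g t)), ?_, fun s hs => ?_⟩
    · have h1 : (1 - Polynomial.X ^ 2 : Polynomial ℝ).natDegree ≤ 2 := by compute_degree
      refine Polynomial.natDegree_add_le_of_degree_le
        (Polynomial.natDegree_mul_le.trans (by omega)) ?_
      have h2 : (Polynomial.X * Polynomial.C (∫ t in Icc (-1 : ℝ) 1, g t) +
        Polynomial.C (∫ t in Icc (-1 : ℝ) 1, t * g t) : Polynomial ℝ).natDegree ≤ 1 := by
        compute_degree
      omega
    · have hfc : Continuous fun t => (s + t) * g t := by fun_prop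
      have hlim := ((hq s hs).const_mul (1 - s ^ 2)).add (tendsto_cut_of_continuous hfc s)
      have hI : ∫ t in Icc (-1 : ℝ) 1, (s + t) * g t =
          s * (∫ t in Icc (-1 : ℝ) 1, g t) + ∫ t in Icc (-1 : ℝ) 1, t * g t := by
        rw [← integral_const_mul, ← integral_add]
        · simp_rw [add_mul]
        · exact (hgc.const_mul s).continuousOn.integrableOn_compact isCompact_Icc
        · exact (continuous_id.mul hgc).continuousOn.integrableOn_compact isCompact_Icc
      rw [hI] at hlim
      have heval : Polynomial.eval s ((1 - Polynomial.X ^ 2) * q +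
          (Polynomial.X * Polynomial.C (∫ t in Icc (-1 : ℝ) 1, g t) +
            Polynomial.C (∫ t in Icc (-1 : ℝ) 1, t * g t))) = (1 - s ^ 2) * q.eval s +
          (s * (∫ t in Icc (-1 : ℝ) 1, g t) + ∫ t in Icc (-1 : ℝ) 1, t * g t) := by
        simp [mul_comm s]
      rw [heval]
      refine hlim.congr' ?_
      filter_upwards [self_mem_nhdsWithin] with ε hε
      have hε : 0 < ε := hε
      rw [← integral_const_mul, ← integral_add]
      · refine setIntegral_congr_fun (measurableSet_cutInterval s ε) fun t ht => ?_
        have hne : s - t ≠ 0 := fun h => by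
          have h1 : t - s = 0 := by linarith
          have h2 := ht.2
          rw [h1, abs_zero] at h2
          linarith
        simp only [hg]
        field_simp
        ring
      · exact (integrableOn_cut hgc s hε).const_mul _
      · exact (hfc.continuousOn.integrableOn_compact isCompact_Icc).mono_set fun t ht => ht.1

lemma iteratedDeriv_polynomial_eval (q : Polynomial ℝ) (k : ℕ) :
    iteratedDeriv k (fun x => q.eval x) = fun x => (Polynomial.derivative^[k] q).eval x := by
  induction k with
  | zero => simp
  | succ k ih =>
    rw [iteratedDeriv_succ, ih]
    ext x
    rw [Polynomial.deriv, Function.iterate_succ_apply']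

/-- The principal-value Hilbert transform of `s ↦ (1−s²)^{(n−1)/2} χ_{[−1,1]}(s)` (for even `n`)
is a polynomial of degree at most `n−1` on `(−1,1)`, so its `n`-th derivative vanishes there. -/
theorem hilbert_transform_ball_profile_polynomial (n : ℕ) (hn : 2 ≤ n) (hneven : Even n) :
    ∃ q : Polynomial ℝ, q.degree ≤ (n - 1 : ℕ) ∧
      (∀ s ∈ Ioo (-1 : ℝ) 1,
        Tendsto
          (fun ε => ∫ t in {t : ℝ | t ∈ Icc (-1 : ℝ) 1 ∧ ε < |t - s|},
            (1 - t ^ 2) ^ (((n : ℝ) - 1) / 2) / (s - t))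
          (𝓝[>] (0 : ℝ)) (𝓝 (q.eval s))) ∧
      (∀ s ∈ Ioo (-1 : ℝ) 1,
        pvHilbert ((Icc (-1 : ℝ) 1).indicator fun t => (1 - t ^ 2) ^ (((n : ℝ) - 1) / 2)) s =
          Real.pi⁻¹ * q.eval s) ∧
      ∀ s ∈ Ioo (-1 : ℝ) 1,
        iteratedDeriv n
          (pvHilbert ((Icc (-1 : ℝ) 1).indicator fun t => (1 - t ^ 2) ^ (((n : ℝ) - 1) / 2)))
          s = 0 := by
  obtain ⟨m, hm⟩ : ∃ m, n = 2 * m + 2 := by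
    obtain ⟨k, hk⟩ := hneven
    exact ⟨k - 1, by omega⟩
  obtain ⟨q, hdeg, hq⟩ := exists_poly m
  have hpow : ∀ t ∈ Icc (-1 : ℝ) 1,
      (1 - t ^ 2) ^ (((n : ℝ) - 1) / 2) = (1 - t ^ 2) ^ m * √(1 - t ^ 2) := by
    intro t ht
    have h0 : 0 ≤ 1 - t ^ 2 := by nlinarith [ht.1, ht.2]
    rw [show ((n : ℝ) - 1) / 2 = (m : ℝ) + 1 / 2 by rw [hm]; push_cast; ring,
      Real.rpow_add_of_nonneg h0 (by positivity) (by positivity), Real.rpow_natCast,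
      Real.sqrt_eq_rpow]
  have hlim : ∀ s ∈ Ioo (-1 : ℝ) 1,
      Tendsto
        (fun ε => ∫ t in {t : ℝ | t ∈ Icc (-1 : ℝ) 1 ∧ ε < |t - s|},
          (1 - t ^ 2) ^ (((n : ℝ) - 1) / 2) / (s - t))
        (𝓝[>] (0 : ℝ)) (𝓝 (q.eval s)) := by
    intro s hs
    refine (hq s hs).congr fun ε => ?_
    refine setIntegral_congr_fun (measurableSet_cutInterval s ε) fun t ht => ?_
    simp only [hpow t ht.1]
  have hpv : ∀ s ∈ Ioo (-1 : ℝ) 1,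
      pvHilbert ((Icc (-1 : ℝ) 1).indicator fun t => (1 - t ^ 2) ^ (((n : ℝ) - 1) / 2)) s =
        Real.pi⁻¹ * q.eval s := by
    intro s hs
    rw [pvHilbert]
    congr 1
    refine Tendsto.limUnder_eq ((hlim s hs).congr fun ε => ?_)
    have hfun : (fun t => (Icc (-1 : ℝ) 1).indicator
          (fun t => (1 - t ^ 2) ^ (((n : ℝ) - 1) / 2)) t / (s - t)) =
        (Icc (-1 : ℝ) 1).indicator
          (fun t => (1 - t ^ 2) ^ (((n : ℝ) - 1) / 2) / (s - t)) := by
      ext t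
      by_cases h : t ∈ Icc (-1 : ℝ) 1
      · rw [indicator_of_mem h, indicator_of_mem h]
      · rw [indicator_of_notMem h, indicator_of_notMem h, zero_div]
    rw [hfun, setIntegral_indicator measurableSet_Icc, inter_comm]
    rfl
  refine ⟨q, Polynomial.natDegree_le_iff_degree_le.1 (by omega), hlim, hpv, fun s hs => ?_⟩
  have hev : pvHilbert ((Icc (-1 : ℝ) 1).indicator fun t => (1 - t ^ 2) ^ (((n : ℝ) - 1) / 2))
      =ᶠ[𝓝 s] fun x => (Polynomial.C Real.pi⁻¹ * q).eval x := by
    filter_upwards [isOpen_Ioo.mem_nhds hs] with x hx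
    rw [hpv x hx, Polynomial.eval_mul, Polynomial.eval_C]
  rw [hev.iteratedDeriv_eq, iteratedDeriv_polynomial_eval,
    Polynomial.iterate_derivative_eq_zero]
  · exact Polynomial.eval_zero
  have := Polynomial.natDegree_C_mul_le Real.pi⁻¹ q
  omega

end
end

section
/- Let n ≥ 1, let A = diag(a₁,…,a_n) with all a_j > 0, let Ω := {x ∈ ℝⁿ : |A^{−1}x| < 1} and let B := {x ∈ ℝⁿ : |x| < 1}. Then for every unit vector ω ∈ ℝⁿ and every s ∈ ℝ, the (n−1)-dimensional Hausdorff measure of Ω ∩ {x : ⟨ω,x⟩ = s} equals (det A / |Aω|) times the (n−1)-dimensional Hausdorff measure of B ∩ {x : ⟨Aω/|Aω|, x⟩ = s/|Aω|}. -/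
/-!
The diagonal map `D = diag(a)` satisfies `⟪ω, D y⟫ = ⟪Aω, y⟫ = |Aω| ⟪ν, y⟫` with `ν = Aω / |Aω|`, and
it pulls the ellipsoid `Ω` back to the ball `B`. So `D` maps the section of `B` by
`{⟪ν, y⟫ = s / |Aω|}` affinely onto the section of `Ω` by `{⟪ω, x⟫ = s}`, and only its volume factor
between these two hyperplanes has to be found.

Choose orthonormal bases `bu`, `bv` of `ℝⁿ` whose zeroth vectors are `ν` and `ω`. In these bases the
zeroth row of the matrix of `D` is `(|Aω|, 0, …, 0)`. Deleting the zeroth row and column leaves a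
matrix `N`, the linear part of `D` between the hyperplanes in orthonormal coordinates, and
`det D = ± |Aω| · det N`, so the factor is `|det N| = det A / |Aω|`. Hausdorff measure is carried from
the hyperplanes to `ℝⁿ⁻¹` by isometric parametrizations (`isometry_hyperplaneParam`); on `ℝⁿ⁻¹` it is
a Haar measure, which `N` scales by `|det N|`. The general statement for an invertible linear map is
`hausdorffMeasure_inter_hyperplane`.
-/

open MeasureTheory Filter Metric Set
open scoped Topology ENNReal RealInnerProductSpace NNReal

noncomputable section

/-- The parametrization `x ↦ c b₀ + ∑ⱼ xⱼ bⱼ₊₁` of the hyperplane `{y | ⟪b₀, y⟫ = c}` attached to an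
orthonormal basis `b` of `ℝᵐ⁺¹`. -/
def hyperplaneParam {m : ℕ} (b : OrthonormalBasis (Fin (m + 1)) ℝ (En (m + 1))) (c : ℝ)
    (x : En m) : En (m + 1) :=
  b.repr.symm (WithLp.toLp 2 (Fin.cons c x))

lemma isometry_hyperplaneParam {m : ℕ} (b : OrthonormalBasis (Fin (m + 1)) ℝ (En (m + 1)))
    (c : ℝ) : Isometry (hyperplaneParam b c) := by
  refine Isometry.of_dist_eq fun x y => ?_
  unfold hyperplaneParam
  rw [b.repr.symm.dist_map, EuclideanSpace.dist_eq, EuclideanSpace.dist_eq, Fin.sum_univ_succ]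
  simp

lemma range_hyperplaneParam {m : ℕ} (b : OrthonormalBasis (Fin (m + 1)) ℝ (En (m + 1)))
    (c : ℝ) : range (hyperplaneParam b c) = {x | ⟪b 0, x⟫ = c} := by
  ext y
  simp only [mem_range, mem_ofPred_eq, hyperplaneParam]
  constructor
  · rintro ⟨x, rfl⟩
    rw [← b.repr_apply_apply]
    simp
  · intro h
    refine ⟨WithLp.toLp 2 fun i => b.repr y i.succ, ?_⟩
    rw [LinearIsometryEquiv.symm_apply_eq]
    ext i
    refine Fin.cases ?_ (fun j => ?_) i
    · simp [b.repr_apply_apply, h]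
    · simp

lemma exists_orthonormalBasis_zero {m : ℕ} (v : En (m + 1)) (hv : ‖v‖ = 1) :
    ∃ b : OrthonormalBasis (Fin (m + 1)) ℝ (En (m + 1)), b 0 = v := by
  obtain ⟨b, hb⟩ := Orthonormal.exists_orthonormalBasis_extension_of_card_eq (𝕜 := ℝ)
    (E := En (m + 1)) (ι := Fin (m + 1)) (by simp) (v := fun _ => v) (s := {0}) (by
      refine ⟨fun _ => hv, fun i j hij => ?_⟩
      exact absurd (Subsingleton.elim i j) hij)
  exact ⟨b, hb 0 rfl⟩

/-- If `D` maps the hyperplanes orthogonal to `ν` to those orthogonal to `ω`, multiplying the signed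
distance to the origin by `c`, then it scales the measure within them by `|det D| / c`. -/
lemma hausdorffMeasure_inter_hyperplane {m : ℕ} (D : En (m + 1) →ₗ[ℝ] En (m + 1))
    (hD : LinearMap.det D ≠ 0) (ω ν : En (m + 1)) (hω : ‖ω‖ = 1) (hν : ‖ν‖ = 1) (c : ℝ)
    (hc : 0 < c) (h : ∀ y, ⟪ω, D y⟫ = c * ⟪ν, y⟫) (S : Set (En (m + 1))) (t : ℝ) :
    μH[(m : ℝ)] (S ∩ {x | ⟪ω, x⟫ = c * t}) =
      ENNReal.ofReal (|LinearMap.det D| / c) * μH[(m : ℝ)] (D ⁻¹' S ∩ {x | ⟪ν, x⟫ = t}) := by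
  obtain ⟨bu, rfl⟩ := exists_orthonormalBasis_zero ν hν
  obtain ⟨bv, rfl⟩ := exists_orthonormalBasis_zero ω hω
  have hm : (0 : ℝ) ≤ m := m.cast_nonneg
  set M : Matrix (Fin (m + 1)) (Fin (m + 1)) ℝ := D.toMatrix bu.toBasis bv.toBasis with hM
  have hM0 : ∀ j, M 0 j = if j = 0 then c else 0 := by
    intro j
    rw [hM, LinearMap.toMatrix_apply]
    simp only [OrthonormalBasis.coe_toBasis, OrthonormalBasis.coe_toBasis_repr_apply]
    rw [bv.repr_apply_apply, h, orthonormal_iff_ite.mp bu.orthonormal]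
    simp [eq_comm]
  have hdetM : |M.det| = |LinearMap.det D| := by
    rw [← LinearMap.normDet_eq_abs_det, D.normDet_eq_norm_det_toMatrix bu bv, Real.norm_eq_abs]
  set N : Matrix (Fin m) (Fin m) ℝ := M.submatrix Fin.succ Fin.succ with hN
  have hdetN : M.det = c * N.det := by
    rw [Matrix.det_succ_row_zero, Finset.sum_eq_single 0]
    · simp [hM0, hN]
    · intro j _ hj
      simp [hM0, hj]
    · simp
  have hN0 : N.det ≠ 0 := by
    intro h0
    rw [hdetN, h0, mul_zero, abs_zero] at hdetM
    exact hD (abs_eq_zero.mp hdetM.symm)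
  set L : En m →ₗ[ℝ] En m := Matrix.toLpLin 2 2 N with hL
  have hdetL : LinearMap.det L = N.det := by
    rw [hL, Matrix.toLpLin_eq_toLin, LinearMap.det_toLin]
  -- the translation part of `D` in the coordinates of the two hyperplanes
  set w : En m := WithLp.toLp 2 fun i => t * M i.succ 0 with hw
  have key : ∀ x, D (hyperplaneParam bu t x) = hyperplaneParam bv (c * t) (L x + w) := by
    intro x
    unfold hyperplaneParam
    rw [LinearIsometryEquiv.eq_symm_apply]
    ext i
    have h1 : bv.repr (D (bu.repr.symm (WithLp.toLp 2 (Fin.cons t x)))) i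
        = ∑ j, M i j * (Fin.cons t x : Fin (m + 1) → ℝ) j := by
      have h2 := congrFun (LinearMap.toMatrix_mulVec_repr bu.toBasis bv.toBasis D
        (bu.repr.symm (WithLp.toLp 2 (Fin.cons t x)))) i
      rw [OrthonormalBasis.coe_toBasis_repr_apply] at h2
      rw [← h2, ← hM, Matrix.mulVec, dotProduct]
      refine Finset.sum_congr rfl fun j _ => ?_
      rw [OrthonormalBasis.coe_toBasis_repr_apply, LinearIsometryEquiv.apply_symm_apply]
    rw [h1, Fin.sum_univ_succ]
    refine Fin.cases ?_ (fun k => ?_) i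
    · simp [hM0]
    · simp [hL, hN, hw, Matrix.toLpLin_apply, Matrix.mulVec, dotProduct]
      ring
  rw [← range_hyperplaneParam bv, ← range_hyperplaneParam bu,
    ← (isometry_hyperplaneParam bv _).hausdorffMeasure_preimage (Or.inl hm),
    ← (isometry_hyperplaneParam bu _).hausdorffMeasure_preimage (Or.inl hm)]
  have hpre : hyperplaneParam bu t ⁻¹' (D ⁻¹' S) =
      L ⁻¹' ((fun x => x + w) ⁻¹' (hyperplaneParam bv (c * t) ⁻¹' S)) := by
    ext x
    simp only [mem_preimage, key]
  have hfin : (m : ℝ) = (Module.finrank ℝ (En m) : ℝ) := by simp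
  rw [hpre, hfin, Measure.addHaar_preimage_linearMap _ (by rwa [hdetL]),
    measure_preimage_add_right, ← mul_assoc, ← ENNReal.ofReal_mul (by positivity), ← hdetM, hdetN,
    hdetL, abs_mul, abs_of_pos hc, abs_inv]
  have : c * |N.det| / c * |N.det|⁻¹ = 1 := by
    have := abs_ne_zero.mpr hN0
    field_simp
  rw [this, ENNReal.ofReal_one, one_mul]

/-- Scaling of hyperplane sections of the ellipsoid `{|A⁻¹x| < 1}` versus the unit ball. -/
theorem hausdorff_measure_ellipsoid_hyperplane_section
    (n : ℕ) (hn : 1 ≤ n) (a : Fin n → ℝ) (ha : ∀ i, 0 < a i)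
    (ω : En n) (hω : ‖ω‖ = 1) (s : ℝ) :
    let Aω : En n := (EuclideanSpace.equiv (Fin n) ℝ).symm fun i => a i * ω i
    let Ω : Set (En n) := {x : En n | ∑ i, (x i / a i) ^ 2 < 1}
    let B : Set (En n) := {x : En n | ‖x‖ < 1}
    μH[(n : ℝ) - 1] (Ω ∩ {x : En n | ⟪ω, x⟫ = s}) =
      ENNReal.ofReal ((∏ i, a i) / ‖Aω‖) *
        μH[(n : ℝ) - 1] (B ∩ {x : En n | ⟪‖Aω‖⁻¹ • Aω, x⟫ = s / ‖Aω‖}) := by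
  intro Aω Ω B
  obtain ⟨m, rfl⟩ : ∃ m, n = m + 1 := ⟨n - 1, by omega⟩
  have hApply : ∀ i, Aω i = a i * ω i := fun i => rfl
  have hA0 : Aω ≠ 0 := by
    rintro h0
    have : ω = 0 := by
      ext i
      have := hApply i
      rw [h0] at this
      simpa [(ha i).ne'] using this.symm
    simp [this] at hω
  have hA : 0 < ‖Aω‖ := norm_pos_iff.mpr hA0
  set D : En (m + 1) →ₗ[ℝ] En (m + 1) := Matrix.toLpLin 2 2 (Matrix.diagonal a) with hDdef
  have hDapply : ∀ y i, D y i = a i * y i := by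
    intro y i
    simp [hDdef, Matrix.toLpLin_apply, Matrix.mulVec_diagonal]
  have hdet : LinearMap.det D = ∏ i, a i := by
    rw [hDdef, Matrix.toLpLin_eq_toLin, LinearMap.det_toLin, Matrix.det_diagonal]
  have hpos : 0 < ∏ i, a i := Finset.prod_pos fun i _ => ha i
  have hpre : D ⁻¹' Ω = B := by
    ext y
    have h1 : ∑ i, (D y i / a i) ^ 2 = ‖y‖ ^ 2 := by
      rw [EuclideanSpace.real_norm_sq_eq]
      refine Finset.sum_congr rfl fun i _ => ?_
      rw [hDapply, mul_div_cancel_left₀ _ (ha i).ne']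
    change ∑ i, (D y i / a i) ^ 2 < 1 ↔ ‖y‖ < 1
    rw [h1, sq_lt_one_iff₀ (norm_nonneg y)]
  have hadj : ∀ y, ⟪ω, D y⟫ = ‖Aω‖ * ⟪‖Aω‖⁻¹ • Aω, y⟫ := by
    intro y
    rw [real_inner_smul_left, mul_inv_cancel_left₀ hA.ne', PiLp.inner_apply, PiLp.inner_apply]
    refine Finset.sum_congr rfl fun i _ => ?_
    rw [hDapply, hApply]
    simp only [RCLike.inner_apply, conj_trivial]
    ring
  have hν : ‖‖Aω‖⁻¹ • Aω‖ = 1 := by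
    rw [norm_smul, norm_inv, norm_norm, inv_mul_cancel₀ hA.ne']
  have main := hausdorffMeasure_inter_hyperplane D (by rw [hdet]; exact hpos.ne') ω
    (‖Aω‖⁻¹ • Aω) hω hν ‖Aω‖ hA hadj Ω (s / ‖Aω‖)
  rw [mul_div_cancel₀ _ hA.ne', hdet, abs_of_pos hpos, hpre] at main
  have hcast : ((m + 1 : ℕ) : ℝ) - 1 = m := by push_cast; ring
  rw [hcast]
  exact main

end
end
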